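/- Let p be an odd prime, n ≥ 1, K = ℚ_p(ζ_{p^n}), π = ζ_{p^n} - 1. For a principal unit ε of K, the trace Tr_{K/ℚ_p}(log ε) lies in p^n·ℤ_p, so that ζ_{p^n}^{Tr(-log ε)/p^n} is well defined (Artin–Hasse). -/

import Mathlib

/-!
Let `ζ` be a primitive `p ^ n`-th root of unity. Since `ζ - 1` is a uniformizer, `ε = 1 - g(ζ)` for
a polynomial `g` over `ℤ_[p]`. Let `A k h` be the sum of the coefficients of `h` at the exponents
divisible by `p ^ k`. Summing over roots of unity gives
`Tr h(ζ) = p ^ n * A n h - p ^ (n - 1) * A (n - 1) h`, hence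
`-Tr (log ε) = ∑ m, (p ^ n * A n (g ^ m) - p ^ (n - 1) * A (n - 1) (g ^ m)) / m`.
Moving the second contribution of the index `m` to the index `p * m` turns the term of index `m`
into `p ^ n / m * (A n (g ^ m) - A (n - 1) (g ^ (m / p)))`, where the second part is absent when
`p` does not divide `m`. This lies in `p ^ n * ℤ_[p]` because `g(X) ^ (p * l)` and `g(X ^ p) ^ l`
are congruent modulo `p * l`.
-/

open Polynomial Filter Topology

section CoeffSum

/-- The sum of the coefficients of a polynomial at the exponents divisible by `q`. Over a field
with a primitive `q`-th root of unity, `q` times this sum is the sum of the values of the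
polynomial at the `q`-th roots of unity; this form makes its integrality visible. -/
noncomputable def coeffSumDvd {R : Type*} [Semiring R] (q : ℕ) : R[X] →ₗ[R] R :=
  Polynomial.lsum fun i => if q ∣ i then LinearMap.id else 0

section Semiring

variable {R : Type*} [Semiring R]

lemma coeffSumDvd_monomial (q i : ℕ) (a : R) :
    coeffSumDvd q (monomial i a) = if q ∣ i then a else 0 := by
  rw [coeffSumDvd, lsum_apply, sum_monomial_index a _ (by simp only [map_zero])]
  split_ifs <;> rfl

lemma coeffSumDvd_map {S : Type*} [Semiring S] (φ : R →+* S) (q : ℕ) (h : R[X]) :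
    coeffSumDvd q (h.map φ) = φ (coeffSumDvd q h) := by
  induction h using Polynomial.induction_on' with
  | add f g hf hg => simp only [Polynomial.map_add, map_add, hf, hg]
  | monomial i a => simp only [map_monomial, coeffSumDvd_monomial, apply_ite φ, map_zero]

end Semiring

lemma coeffSumDvd_expand {R : Type*} [CommSemiring R] {p : ℕ} (hp : 0 < p) (q : ℕ) (h : R[X]) :
    coeffSumDvd (q * p) (expand R p h) = coeffSumDvd q h := by
  induction h using Polynomial.induction_on' with
  | add f g hf hg => simp only [map_add, hf, hg]
  | monomial i a =>
    simp only [expand_monomial, coeffSumDvd_monomial, Nat.mul_dvd_mul_iff_right hp]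

lemma dvd_coeffSumDvd_of_C_dvd {R : Type*} [CommSemiring R] {c : R} {h : R[X]} (q : ℕ)
    (hc : C c ∣ h) : c ∣ coeffSumDvd q h := by
  obtain ⟨f, rfl⟩ := hc
  rw [← smul_eq_C_mul, map_smul, smul_eq_mul]
  exact dvd_mul_right _ _

end CoeffSum

section RootsOfUnity

lemma isCyclotomicExtension_of_adjoin_eq_top {R S : Type*} [CommRing R] [CommRing S]
    [Algebra R S] {N : ℕ} [NeZero N] {ζ : S} (hζ : IsPrimitiveRoot ζ N)
    (hgen : Algebra.adjoin R {ζ} = ⊤) : IsCyclotomicExtension {N} R S := by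
  rw [IsCyclotomicExtension.iff_singleton]
  refine ⟨⟨ζ, hζ⟩, fun x => ?_⟩
  have hx : x ∈ Algebra.adjoin R {ζ} := by rw [hgen]; exact Algebra.mem_top
  exact Algebra.adjoin_mono (by simpa using hζ.pow_eq_one) hx

variable {R S : Type*} [CommRing R] [CommRing S] [IsDomain S] [Algebra R S]

lemma sum_nthRootsFinset_pow {q : ℕ} {η : S} (hη : IsPrimitiveRoot η q) (i : ℕ) :
    ∑ μ ∈ nthRootsFinset q (1 : S), μ ^ i = if q ∣ i then (q : S) else 0 := by
  rcases q.eq_zero_or_pos with rfl | hq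
  · simp
  split_ifs with hi
  · have hone : ∀ μ ∈ nthRootsFinset q (1 : S), μ ^ i = 1 := fun μ hμ => by
      obtain ⟨l, rfl⟩ := hi
      rw [pow_mul, (mem_nthRootsFinset hq 1).1 hμ, one_pow]
    rw [Finset.sum_congr rfl hone, Finset.sum_const, hη.card_nthRootsFinset, nsmul_one]
  · have hηi : η ^ i ≠ 1 := fun h => hi ((hη.pow_eq_one_iff_dvd i).1 h)
    refine eq_zero_of_mul_eq_self_left hηi ?_
    rw [Finset.mul_sum]
    refine Finset.sum_equiv (hη.isUnit hq.ne').unit.mulLeft (fun μ => ?_) fun μ _ => ?_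
    · rw [mem_nthRootsFinset hq, mem_nthRootsFinset hq, Units.mulLeft_apply, IsUnit.unit_spec,
        mul_pow, hη.pow_eq_one, one_mul]
    · rw [Units.mulLeft_apply, IsUnit.unit_spec, mul_pow]

lemma sum_nthRootsFinset_aeval {q : ℕ} {η : S} (hη : IsPrimitiveRoot η q) (h : R[X]) :
    ∑ μ ∈ nthRootsFinset q (1 : S), aeval μ h = algebraMap R S (q * coeffSumDvd q h) := by
  induction h using Polynomial.induction_on' with
  | add f g hf hg => simp only [map_add, Finset.sum_add_distrib, hf, hg, mul_add]
  | monomial i a =>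
    simp only [aeval_monomial, ← Finset.mul_sum, sum_nthRootsFinset_pow hη, coeffSumDvd_monomial]
    split_ifs <;> simp [mul_comm]

lemma sum_primitiveRoots_prime_pow {p : ℕ} (hp : p.Prime) (k : ℕ) {M : Type*} [AddCommGroup M]
    (f : S → M) :
    ∑ μ ∈ primitiveRoots (p ^ (k + 1)) S, f μ
      = ∑ μ ∈ nthRootsFinset (p ^ (k + 1)) (1 : S), f μ
        - ∑ μ ∈ nthRootsFinset (p ^ k) (1 : S), f μ := by
  classical
  have hsum : ∀ l : ℕ, ∑ μ ∈ nthRootsFinset (p ^ l) (1 : S), f μ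
      = ∑ i ∈ Finset.range (l + 1), ∑ μ ∈ primitiveRoots (p ^ i) S, f μ := fun l => by
    rw [IsPrimitiveRoot.nthRoots_one_eq_biUnion_primitiveRoots, Finset.sum_biUnion
      fun _ _ _ _ hij => IsPrimitiveRoot.disjoint hij, Nat.sum_divisors_prime_pow hp]
  rw [hsum, hsum, Finset.sum_range_succ _ (k + 1), add_sub_cancel_left]

variable {F K : Type*} [Field F] [Field K] [Algebra F K]

lemma trace_aeval_eq_sum_primitiveRoots {N : ℕ} [NeZero N] [IsCyclotomicExtension {N} F K]
    (hirr : Irreducible (cyclotomic N F)) {ζ : K} (hζ : IsPrimitiveRoot ζ N) (h : F[X]) :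
    algebraMap F K (Algebra.trace F K (aeval ζ h)) = ∑ μ ∈ primitiveRoots N K, aeval μ h := by
  have := IsCyclotomicExtension.finiteDimensional {N} F K
  have := IsCyclotomicExtension.isGalois {N} F K
  rw [trace_eq_sum_automorphisms, ← Finset.sum_coe_sort (primitiveRoots N K)]
  refine Fintype.sum_equiv ((algEquivEquivAlgHom F K).toEquiv.trans
    (hζ.embeddingsEquivPrimitiveRoots K hirr)) _ _ fun σ => ?_
  exact (aeval_algHom_apply (σ : K →ₐ[F] K) ζ h).symm

lemma trace_aeval_eq_sub_coeffSumDvd {p k : ℕ} (hp : p.Prime)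
    [IsCyclotomicExtension {p ^ (k + 1)} F K] (hirr : Irreducible (cyclotomic (p ^ (k + 1)) F))
    {ζ : K} (hζ : IsPrimitiveRoot ζ (p ^ (k + 1))) (h : F[X]) :
    Algebra.trace F K (aeval ζ h) = (p ^ (k + 1) : ℕ) * coeffSumDvd (p ^ (k + 1)) h
      - (p ^ k : ℕ) * coeffSumDvd (p ^ k) h := by
  have : NeZero (p ^ (k + 1)) := ⟨pow_ne_zero _ hp.ne_zero⟩
  have hζp : IsPrimitiveRoot (ζ ^ p) (p ^ k) := hζ.pow (NeZero.pos _) (pow_succ' p k)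
  apply (algebraMap F K).injective
  rw [trace_aeval_eq_sum_primitiveRoots hirr hζ, sum_primitiveRoots_prime_pow hp,
    sum_nthRootsFinset_aeval hζ, sum_nthRootsFinset_aeval hζp, map_sub]

end RootsOfUnity

section Congruence

variable {p : ℕ} [Fact p.Prime]

lemma C_prime_dvd_pow_sub_expand (g : ℤ_[p][X]) :
    C (p : ℤ_[p]) ∣ g ^ p - expand ℤ_[p] p g := by
  rw [C_dvd_iff_dvd_coeff]
  intro i
  rw [← Ideal.mem_span_singleton, ← PadicInt.maximalIdeal_eq_span_p, ← PadicInt.ker_toZMod,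
    RingHom.mem_ker, ← coeff_map, Polynomial.map_sub, Polynomial.map_pow, map_expand,
    ZMod.expand_card, sub_self, coeff_zero]

lemma C_dvd_pow_mul_sub_expand_pow (g : ℤ_[p][X]) {m : ℕ} (hm : m ≠ 0) :
    C ((p * m : ℕ) : ℤ_[p]) ∣ g ^ (p * m) - expand ℤ_[p] p (g ^ m) := by
  obtain ⟨v, u, hu, rfl⟩ := Nat.exists_eq_pow_mul_and_not_dvd hm p (Fact.out : p.Prime).ne_one
  have hunit : IsUnit (C (u : ℤ_[p])) := by
    refine (PadicInt.isUnit_iff.2 (PadicInt.norm_natCast_eq_one_iff.2 ?_)).map C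
    exact (Nat.Prime.coprime_iff_not_dvd Fact.out).2 hu
  have hpow : (p : ℤ_[p][X]) ^ (v + 1) ∣ (g ^ p) ^ p ^ v - expand ℤ_[p] p g ^ p ^ v :=
    dvd_sub_pow_of_dvd_sub (by simpa using C_prime_dvd_pow_sub_expand g) v
  have hfactor : C ((p * (p ^ v * u) : ℕ) : ℤ_[p]) = (p : ℤ_[p][X]) ^ (v + 1) * C (u : ℤ_[p]) := by
    simp only [map_natCast]; push_cast; ring
  rw [hfactor, hunit.mul_right_dvd, pow_mul, pow_mul, pow_mul, map_pow, map_pow]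
  exact hpow.trans (sub_dvd_pow_sub_pow _ _ u)

end Congruence

section Norm

lemma aeval_eq_sum_support {R A : Type*} [CommSemiring R] [Semiring A] [Algebra R A] (f : R[X])
    (x : A) : aeval x f = ∑ i ∈ f.support, f.coeff i • x ^ i := by
  simp only [aeval_def, eval₂_eq_sum, sum_def, Algebra.smul_def]

lemma norm_pow_sub_one_le {K : Type*} [NormedDivisionRing K] [IsUltrametricDist K] {x : K}
    (hx : ‖x‖ = 1) (j : ℕ) : ‖x ^ j - 1‖ ≤ ‖x - 1‖ := by
  rw [← geom_sum_mul, norm_mul]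
  refine mul_le_of_le_one_left (norm_nonneg _) ?_
  refine IsUltrametricDist.norm_sum_le_of_forall_le_of_nonneg zero_le_one fun i _ => ?_
  rw [norm_pow, hx, one_pow]

lemma norm_sub_one_le_of_pow_eq_one {K : Type*} [NormedField K] [IsUltrametricDist K] {N : ℕ}
    [NeZero N] {ζ μ : K} (hζ : IsPrimitiveRoot ζ N) (hμ : μ ^ N = 1) : ‖μ - 1‖ ≤ ‖ζ - 1‖ := by
  obtain ⟨j, -, rfl⟩ := hζ.eq_pow_of_pow_eq_one hμ
  exact norm_pow_sub_one_le (hζ.isOfFinOrder (NeZero.ne N)).norm_eq_one j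

variable {p : ℕ} [Fact p.Prime]

lemma exists_eq_mul_of_norm_le {a b : ℚ_[p]} (h : ‖a‖ ≤ ‖b‖) : ∃ c : ℤ_[p], a = b * c := by
  refine ⟨⟨a / b, ?_⟩, (mul_div_cancel_of_imp' fun hb => ?_).symm⟩
  · rw [norm_div]
    exact div_le_one_of_le₀ h (norm_nonneg _)
  · rwa [hb, norm_zero, norm_le_zero_iff] at h

lemma valuation_eq_of_norm_eq {a b : ℚ_[p]} (ha : a ≠ 0) (hb : b ≠ 0) (h : ‖a‖ = ‖b‖) :
    a.valuation = b.valuation := by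
  have hp : 1 < (p : ℝ) := by exact_mod_cast (Fact.out : p.Prime).one_lt
  rw [Padic.norm_eq_zpow_neg_valuation ha, Padic.norm_eq_zpow_neg_valuation hb] at h
  exact neg_injective (zpow_right_injective₀ (zero_lt_one.trans hp) hp.ne' h)

-- After raising to the power `e`, the valuations of the two sides give `i ≡ j` modulo `e`.
lemma eq_of_norm_mul_pow_eq {r : ℝ} {e : ℕ} (hr : r ^ e = ‖(p : ℚ_[p])‖) {a b : ℚ_[p]}
    (ha : a ≠ 0) (hb : b ≠ 0) {i j : ℕ} (hi : i < e) (hj : j < e)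
    (h : ‖a‖ * r ^ i = ‖b‖ * r ^ j) : i = j := by
  have hp0 : (p : ℚ_[p]) ≠ 0 := Nat.cast_ne_zero.2 (Fact.out : p.Prime).ne_zero
  have hnorm : ‖a ^ e * (p : ℚ_[p]) ^ i‖ = ‖b ^ e * (p : ℚ_[p]) ^ j‖ := by
    simp only [norm_mul, norm_pow, ← hr]
    calc ‖a‖ ^ e * (r ^ e) ^ i = (‖a‖ * r ^ i) ^ e := by ring
      _ = (‖b‖ * r ^ j) ^ e := by rw [h]
      _ = ‖b‖ ^ e * (r ^ e) ^ j := by ring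
  have hval : e * a.valuation + i = e * b.valuation + j := by
    have := valuation_eq_of_norm_eq (mul_ne_zero (pow_ne_zero e ha) (pow_ne_zero i hp0))
      (mul_ne_zero (pow_ne_zero e hb) (pow_ne_zero j hp0)) hnorm
    simpa [Padic.valuation_mul, pow_ne_zero, ha, hb, hp0] using this
  have hmod : (i : ℤ) ≡ j [ZMOD e] :=
    Int.modEq_iff_dvd.2 ⟨a.valuation - b.valuation, by linear_combination -hval⟩
  exact (Int.natCast_modEq_iff.1 hmod).eq_of_lt_of_lt hi hj

variable {K : Type*} [NormedField K] {π : K} {e : ℕ}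

lemma norm_lt_one_of_norm_pow_eq (hπ : ‖π‖ ^ e = ‖(p : ℚ_[p])‖) : ‖π‖ < 1 := by
  by_contra! h
  exact ((one_le_pow₀ h).trans_eq hπ).not_gt Padic.norm_p_lt_one

lemma ne_zero_of_norm_pow_eq (hπ : ‖π‖ ^ e = ‖(p : ℚ_[p])‖) (he : e ≠ 0) : π ≠ 0 := by
  rintro rfl
  rw [norm_zero, zero_pow he] at hπ
  exact (norm_pos_iff.2 (Nat.cast_ne_zero.2 (Fact.out : p.Prime).ne_zero)).ne hπ

variable [NormedAlgebra ℚ_[p] K]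

lemma norm_sub_one_pow_totient {ζ : K} {k : ℕ} (hζ : IsPrimitiveRoot ζ (p ^ (k + 1))) :
    ‖ζ - 1‖ ^ (p ^ (k + 1)).totient = ‖(p : ℚ_[p])‖ := by
  have : IsUltrametricDist K := IsUltrametricDist.of_normedAlgebra ℚ_[p]
  have hconj : ∀ μ ∈ primitiveRoots (p ^ (k + 1)) K, ‖1 - μ‖ = ‖ζ - 1‖ := fun μ hμ => by
    have hμ := isPrimitiveRoot_of_mem_primitiveRoots hμ
    rw [norm_sub_rev]
    exact (norm_sub_one_le_of_pow_eq_one hζ hμ.pow_eq_one).antisymm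
      (norm_sub_one_le_of_pow_eq_one hμ hζ.pow_eq_one)
  have hprod : ∏ μ ∈ primitiveRoots (p ^ (k + 1)) K, (1 - μ) = p := by
    rw [← eval_one_cyclotomic_prime_pow (R := K) (p := p) k,
      cyclotomic_eq_prod_X_sub_primitiveRoots hζ, eval_prod]
    simp only [eval_sub, eval_X, eval_C]
  rw [← norm_algebraMap' K (p : ℚ_[p]), map_natCast, ← hprod, norm_prod,
    Finset.prod_congr rfl hconj, Finset.prod_const, hζ.card_primitiveRoots]

lemma norm_coeff_mul_pow_le_norm_aeval (hπ : ‖π‖ ^ e = ‖(p : ℚ_[p])‖) {f : ℚ_[p][X]}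
    (hf : f.degree < e) (i : ℕ) : ‖f.coeff i‖ * ‖π‖ ^ i ≤ ‖aeval π f‖ := by
  have : IsUltrametricDist K := IsUltrametricDist.of_normedAlgebra ℚ_[p]
  by_cases hi : i ∈ f.support
  swap
  · rw [notMem_support_iff.1 hi, norm_zero, zero_mul]
    exact norm_nonneg _
  have hlt : ∀ j ∈ f.support, j < e := fun j hj =>
    Nat.cast_lt.1 ((le_degree_of_mem_supp j hj).trans_lt hf)
  have hdistinct : (f.support : Set ℕ).Pairwise
      fun i j => ‖f.coeff i • π ^ i‖ ≠ ‖f.coeff j • π ^ j‖ := fun i hi j hj hij h => by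
    simp only [norm_smul, norm_pow] at h
    exact hij (eq_of_norm_mul_pow_eq hπ (mem_support_iff.1 hi) (mem_support_iff.1 hj)
      (hlt i hi) (hlt j hj) h)
  rw [← norm_pow, ← norm_smul, aeval_eq_sum_support,
    IsUltrametricDist.norm_sum_eq_sup'_of_pairwise_ne ⟨i, hi⟩ hdistinct]
  exact Finset.le_sup' (fun j => ‖f.coeff j • π ^ j‖) hi

lemma norm_aeval_le_of_norm_le (hπ : ‖π‖ ^ e = ‖(p : ℚ_[p])‖) {f : ℚ_[p][X]}
    (hf : f.degree < e) {y : K} (hy : ‖y‖ ≤ ‖π‖) : ‖aeval y f‖ ≤ ‖aeval π f‖ := by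
  have : IsUltrametricDist K := IsUltrametricDist.of_normedAlgebra ℚ_[p]
  rw [aeval_eq_sum_support f y]
  refine IsUltrametricDist.norm_sum_le_of_forall_le_of_nonneg (norm_nonneg _) fun i _ => ?_
  refine le_trans ?_ (norm_coeff_mul_pow_le_norm_aeval hπ hf i)
  rw [norm_smul, norm_pow]
  gcongr

lemma norm_coeff_le_one_of_norm_aeval_le_one (hπ : ‖π‖ ^ e = ‖(p : ℚ_[p])‖) {f : ℚ_[p][X]}
    (hf : f.degree < e) (h : ‖aeval π f‖ ≤ 1) (i : ℕ) : ‖f.coeff i‖ ≤ 1 := by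
  by_cases hi : f.coeff i = 0
  · simp [hi]
  have hie : i < e := Nat.cast_lt.1 ((le_degree_of_ne_zero hi).trans_lt hf)
  have hπ0 : 0 < ‖π‖ := norm_pos_iff.2 (ne_zero_of_norm_pow_eq hπ (by lia))
  have hlt : ‖f.coeff i‖ * ‖(p : ℚ_[p])‖ < 1 := calc
    ‖f.coeff i‖ * ‖(p : ℚ_[p])‖ = ‖f.coeff i‖ * ‖π‖ ^ e := by rw [hπ]
    _ < ‖f.coeff i‖ * ‖π‖ ^ i :=
      mul_lt_mul_of_pos_left
        (pow_lt_pow_right_of_lt_one₀ hπ0 (norm_lt_one_of_norm_pow_eq hπ) hie) (norm_pos_iff.2 hi)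
    _ ≤ 1 := (norm_coeff_mul_pow_le_norm_aeval hπ hf i).trans h
  have hp0 : 0 < (p : ℝ) := Nat.cast_pos.2 (Fact.out : p.Prime).pos
  rw [← zpow_zero (p : ℝ), Padic.norm_le_pow_iff_norm_lt_pow_add_one, zero_add, zpow_one]
  rwa [Padic.norm_p, ← div_eq_mul_inv, div_lt_one hp0] at hlt

lemma irreducible_map_padic_of_isEisensteinAt {f : ℤ[X]} (hf : f.Monic)
    (heis : f.IsEisensteinAt (Ideal.span {(p : ℤ)})) (hdeg : 0 < f.natDegree) :
    Irreducible (f.map (Int.castRingHom ℚ_[p])) := by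
  set P : ℤ_[p][X] := f.map (Int.castRingHom ℤ_[p]) with hP
  have hmonic : P.Monic := hf.map _
  have hprime : (Ideal.span {(p : ℤ_[p])}).IsPrime :=
    (Ideal.span_singleton_prime PadicInt.prime_p.ne_zero).2 PadicInt.prime_p
  have hcoeff (r i : ℕ) :
      P.coeff i ∈ Ideal.span {(p : ℤ_[p])} ^ r ↔ f.coeff i ∈ Ideal.span {(p : ℤ)} ^ r := by
    rw [Ideal.span_singleton_pow, Ideal.mem_span_singleton, Ideal.span_singleton_pow,
      Ideal.mem_span_singleton, hP, coeff_map, eq_intCast, PadicInt.pow_p_dvd_int_iff]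
  have hPdeg : P.natDegree = f.natDegree := hf.natDegree_map _
  have hPeis : P.IsEisensteinAt (Ideal.span {(p : ℤ_[p])}) := by
    refine hmonic.isEisensteinAt_of_mem_of_notMem hprime.ne_top (fun {i} hi => ?_) ?_
    · have := (hcoeff 1 i).2 (by rw [pow_one]; exact heis.mem (hPdeg ▸ hi))
      rwa [pow_one] at this
    · exact (hcoeff 2 0).not.2 heis.notMem
  have hirr := hPeis.irreducible hprime hmonic.isPrimitive (hPdeg ▸ hdeg)
  rw [hmonic.irreducible_iff_irreducible_map_fraction_map (K := ℚ_[p]), hP, Polynomial.map_map]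
    at hirr
  exact hirr

lemma irreducible_cyclotomic_prime_pow_padic (p : ℕ) [Fact p.Prime] (k : ℕ) :
    Irreducible (cyclotomic (p ^ (k + 1)) ℚ_[p]) := by
  have hdeg : 0 < ((cyclotomic (p ^ (k + 1)) ℤ).comp (X + 1)).natDegree := by
    rw [natDegree_comp, natDegree_cyclotomic, ← C_1, natDegree_X_add_C, mul_one]
    exact Nat.totient_pos.2 (pow_pos (Fact.out : p.Prime).pos _)
  have hirr := irreducible_map_padic_of_isEisensteinAt ((cyclotomic.monic _ _).comp_X_add_C 1)
    (cyclotomic_prime_pow_comp_X_add_one_isEisensteinAt p k) hdeg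
  rw [Polynomial.map_comp, map_cyclotomic] at hirr
  refine (MulEquiv.irreducible_iff (algEquivAevalXAddC (1 : ℚ_[p]))).1 ?_
  simpa [algEquivAevalXAddC, comp, aeval_def, algebraMap_eq] using hirr

lemma exists_aeval_map_eq_of_norm_lt_one {k : ℕ} [IsCyclotomicExtension {p ^ (k + 1)} ℚ_[p] K]
    {ζ : K} (hζ : IsPrimitiveRoot ζ (p ^ (k + 1))) {x : K} (hx : ‖x‖ < 1) :
    ∃ g : ℤ_[p][X], aeval ζ (g.map (algebraMap ℤ_[p] ℚ_[p])) = x ∧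
      ∀ μ ∈ nthRootsFinset (p ^ (k + 1)) (1 : K),
        ‖aeval μ (g.map (algebraMap ℤ_[p] ℚ_[p]))‖ < 1 := by
  have : IsUltrametricDist K := IsUltrametricDist.of_normedAlgebra ℚ_[p]
  have hπ := norm_sub_one_pow_totient hζ
  obtain ⟨f, hfdeg, rfl⟩ : ∃ f : ℚ_[p][X], f.degree < (p ^ (k + 1)).totient ∧
      aeval (ζ - 1) f = x := by
    have hdim : (hζ.subOnePowerBasis ℚ_[p]).dim = (p ^ (k + 1)).totient := by
      rw [← PowerBasis.finrank, IsCyclotomicExtension.finrank (n := p ^ (k + 1)) K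
        (irreducible_cyclotomic_prime_pow_padic p k)]
    obtain ⟨f, hf, hfx⟩ := (hζ.subOnePowerBasis ℚ_[p]).exists_eq_aeval x
    rw [IsPrimitiveRoot.subOnePowerBasis_gen ℚ_[p] hζ] at hfx
    exact ⟨f, degree_le_natDegree.trans_lt (Nat.cast_lt.2 (hdim ▸ hf)), hfx.symm⟩
  obtain ⟨h, rfl⟩ : f ∈ lifts (algebraMap ℤ_[p] ℚ_[p]) := (lifts_iff_coeff_lifts f).2 fun i =>
    ⟨⟨f.coeff i, norm_coeff_le_one_of_norm_aeval_le_one hπ hfdeg hx.le i⟩, rfl⟩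
  have hcomp : ∀ μ : K, aeval μ ((h.comp (X - 1)).map (algebraMap ℤ_[p] ℚ_[p]))
      = aeval (μ - 1) (h.map (algebraMap ℤ_[p] ℚ_[p])) := fun μ => by
    simp only [Polynomial.map_comp, Polynomial.map_sub, map_X, Polynomial.map_one, aeval_comp,
      map_sub, aeval_X, map_one]
  refine ⟨h.comp (X - 1), hcomp ζ, fun μ hμ => ?_⟩
  rw [hcomp]
  refine (norm_aeval_le_of_norm_le hπ hfdeg (norm_sub_one_le_of_pow_eq_one hζ ?_)).trans_lt hx
  exact (mem_nthRootsFinset (NeZero.pos _) 1).1 hμ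

end Norm

section LogSeries

lemma inv_norm_natCast_padic_le (p : ℕ) [Fact p.Prime] (m : ℕ) : ‖(m : ℚ_[p])‖⁻¹ ≤ m := by
  rcases eq_or_ne m 0 with rfl | hm
  · simp
  rw [Padic.norm_eq_zpow_neg_valuation (Nat.cast_ne_zero.2 hm), zpow_neg, inv_inv,
    Padic.valuation_natCast, zpow_natCast]
  exact_mod_cast Nat.le_of_dvd (Nat.pos_of_ne_zero hm) pow_padicValNat_dvd

lemma summable_of_tendsto_atTop_zero {E : Type*} [SeminormedAddCommGroup E] [CompleteSpace E]
    [IsUltrametricDist E] {f : ℕ → E} (hf : Tendsto f atTop (𝓝 0)) : Summable f :=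
  NonarchimedeanAddGroup.summable_of_tendsto_cofinite_zero (Nat.cofinite_eq_atTop ▸ hf)

lemma tendsto_pow_div_natCast_zero (p : ℕ) [Fact p.Prime] {K : Type*} [NormedField K]
    [NormedAlgebra ℚ_[p] K] {x : K} (hx : ‖x‖ < 1) :
    Tendsto (fun m : ℕ => x ^ m / m) atTop (𝓝 0) := by
  refine squeeze_zero_norm (fun m => ?_)
    (tendsto_self_mul_const_pow_of_lt_one (norm_nonneg x) hx)
  have hm : ‖(m : K)‖⁻¹ ≤ m := by
    rw [← map_natCast (algebraMap ℚ_[p] K), norm_algebraMap']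
    exact inv_norm_natCast_padic_le p m
  rw [norm_div, norm_pow, div_eq_inv_mul]
  gcongr

lemma summable_pow_div_natCast (p : ℕ) [Fact p.Prime] {K : Type*} [NormedField K]
    [NormedAlgebra ℚ_[p] K] [FiniteDimensional ℚ_[p] K] {x : K} (hx : ‖x‖ < 1) :
    Summable fun m : ℕ => x ^ m / m :=
  have := IsUltrametricDist.of_normedAlgebra (L := K) ℚ_[p]
  have := FiniteDimensional.complete ℚ_[p] K
  summable_of_tendsto_atTop_zero (tendsto_pow_div_natCast_zero p hx)

lemma tsum_log_eq_neg_tsum_pow_div {K : Type*} [NormedField K] {ε : K}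
    (h : Summable fun m : ℕ => (1 - ε) ^ m / m) :
    ∑' m : ℕ, (-1) ^ m * (ε - 1) ^ (m + 1) / (m + 1) = -∑' m : ℕ, (1 - ε) ^ m / m := by
  rw [h.tsum_eq_zero_add, Nat.cast_zero, div_zero, zero_add, ← tsum_neg]
  refine tsum_congr fun m => ?_
  rw [← neg_sub ε 1, neg_pow (ε - 1), Nat.cast_succ]
  ring

/-- The `m`-th term of the power series of `-∑ log (1 - G μ)`, the sum being over the `q`-th roots
of unity `μ`, as an element of the field of coefficients of `G`. The term of index `0` is `0` by
the convention on division by zero. -/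
noncomputable def rootsLogTerm {F : Type*} [Field F] (q : ℕ) (G : F[X]) (m : ℕ) : F :=
  q * coeffSumDvd q (G ^ m) / m

section Field

variable {F K : Type*} [Field F] [Field K] [Algebra F K]

lemma algebraMap_rootsLogTerm {q : ℕ} {η : K} (hη : IsPrimitiveRoot η q) (G : F[X]) (m : ℕ) :
    algebraMap F K (rootsLogTerm q G m)
      = ∑ μ ∈ nthRootsFinset q (1 : K), aeval μ G ^ m / m := by
  rw [rootsLogTerm, map_div₀, ← sum_nthRootsFinset_aeval hη, map_natCast, Finset.sum_div]
  simp only [map_pow]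

lemma trace_aeval_pow_div {p k : ℕ} (hp : p.Prime) [IsCyclotomicExtension {p ^ (k + 1)} F K]
    (hirr : Irreducible (cyclotomic (p ^ (k + 1)) F)) {ζ : K}
    (hζ : IsPrimitiveRoot ζ (p ^ (k + 1))) (G : F[X]) (m : ℕ) :
    Algebra.trace F K (aeval ζ G ^ m / m)
      = rootsLogTerm (p ^ (k + 1)) G m - rootsLogTerm (p ^ k) G m := by
  have hsmul : aeval ζ G ^ m / m = (m : F)⁻¹ • aeval ζ (G ^ m) := by
    rw [map_pow, Algebra.smul_def, map_inv₀, map_natCast, div_eq_inv_mul]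
  rw [hsmul, map_smul, trace_aeval_eq_sub_coeffSumDvd hp hirr hζ, rootsLogTerm, rootsLogTerm,
    smul_eq_mul, ← sub_div, div_eq_inv_mul]

end Field

variable {p : ℕ} [Fact p.Prime]

section TermBounds

lemma norm_rootsLogTerm_le_of_not_dvd (g : ℤ_[p][X]) (k : ℕ) {m : ℕ} (hm : ¬ p ∣ m) :
    ‖rootsLogTerm (p ^ k) (g.map (algebraMap ℤ_[p] ℚ_[p])) m‖ ≤ ‖(p : ℚ_[p]) ^ k‖ := by
  have hm1 : ‖(m : ℚ_[p])‖ = 1 :=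
    Padic.norm_natCast_eq_one_iff.2 ((Nat.Prime.coprime_iff_not_dvd Fact.out).2 hm)
  rw [rootsLogTerm, norm_div, hm1, div_one, norm_mul, ← Polynomial.map_pow, coeffSumDvd_map,
    Nat.cast_pow]
  exact mul_le_of_le_one_right (norm_nonneg _) (PadicInt.norm_le_one _)

lemma norm_rootsLogTerm_prime_mul_sub_le (g : ℤ_[p][X]) (k l : ℕ) :
    ‖rootsLogTerm (p ^ (k + 1)) (g.map (algebraMap ℤ_[p] ℚ_[p])) (p * l)
      - rootsLogTerm (p ^ k) (g.map (algebraMap ℤ_[p] ℚ_[p])) l‖ ≤ ‖(p : ℚ_[p]) ^ (k + 1)‖ := by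
  have hp : p.Prime := Fact.out
  rcases eq_or_ne l 0 with rfl | hl
  · rw [mul_zero, rootsLogTerm, rootsLogTerm, Nat.cast_zero, div_zero, div_zero, sub_zero,
      norm_zero]
    exact norm_nonneg _
  obtain ⟨c, hc⟩ := dvd_coeffSumDvd_of_C_dvd (p ^ (k + 1)) (C_dvd_pow_mul_sub_expand_pow g hl)
  rw [map_sub, pow_succ, coeffSumDvd_expand hp.pos, ← pow_succ] at hc
  have hcast : (algebraMap ℤ_[p] ℚ_[p]) (coeffSumDvd (p ^ (k + 1)) (g ^ (p * l)))
      = algebraMap ℤ_[p] ℚ_[p] (coeffSumDvd (p ^ k) (g ^ l)) + p * l * c := by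
    rw [← sub_eq_iff_eq_add', ← map_sub, hc, map_mul, map_natCast, Nat.cast_mul]
    rfl
  have hp0 : (p : ℚ_[p]) ≠ 0 := Nat.cast_ne_zero.2 hp.ne_zero
  have hl0 : (l : ℚ_[p]) ≠ 0 := Nat.cast_ne_zero.2 hl
  have hterm : rootsLogTerm (p ^ (k + 1)) (g.map (algebraMap ℤ_[p] ℚ_[p])) (p * l)
      - rootsLogTerm (p ^ k) (g.map (algebraMap ℤ_[p] ℚ_[p])) l = (p : ℚ_[p]) ^ (k + 1) * c := by
    simp only [rootsLogTerm, ← Polynomial.map_pow, coeffSumDvd_map, hcast]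
    push_cast
    field_simp
    ring
  rw [hterm, norm_mul]
  exact mul_le_of_le_one_right (norm_nonneg _) (PadicInt.norm_le_one c)

lemma norm_rootsLogTerm_sub_extend_le (g : ℤ_[p][X]) (k m : ℕ) :
    ‖rootsLogTerm (p ^ (k + 1)) (g.map (algebraMap ℤ_[p] ℚ_[p])) m
      - Function.extend (p * ·) (rootsLogTerm (p ^ k) (g.map (algebraMap ℤ_[p] ℚ_[p]))) 0 m‖
      ≤ ‖(p : ℚ_[p]) ^ (k + 1)‖ := by
  have hinj : Function.Injective (p * ·) := mul_right_injective₀ (Fact.out : p.Prime).ne_zero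
  by_cases hm : p ∣ m
  · obtain ⟨l, rfl⟩ := hm
    rw [hinj.extend_apply]
    exact norm_rootsLogTerm_prime_mul_sub_le g k l
  · rw [Function.extend_apply' _ _ _ fun ⟨l, hl⟩ => hm ⟨l, hl.symm⟩, Pi.zero_apply, sub_zero]
    exact norm_rootsLogTerm_le_of_not_dvd g (k + 1) hm

lemma norm_tsum_rootsLogTerm_sub_le {g : ℤ_[p][X]} {k : ℕ}
    (hsucc : Summable (rootsLogTerm (p ^ (k + 1)) (g.map (algebraMap ℤ_[p] ℚ_[p]))))
    (hk : Summable (rootsLogTerm (p ^ k) (g.map (algebraMap ℤ_[p] ℚ_[p])))) :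
    ‖∑' m, rootsLogTerm (p ^ (k + 1)) (g.map (algebraMap ℤ_[p] ℚ_[p])) m
      - ∑' m, rootsLogTerm (p ^ k) (g.map (algebraMap ℤ_[p] ℚ_[p])) m‖
      ≤ ‖(p : ℚ_[p]) ^ (k + 1)‖ := by
  have hinj : Function.Injective (p * ·) := mul_right_injective₀ (Fact.out : p.Prime).ne_zero
  have hextend := (hasSum_extend_zero hinj).2 hk.hasSum
  rw [← (hsucc.hasSum.sub hextend).tsum_eq]
  exact IsUltrametricDist.norm_tsum_le_of_forall_le_of_nonneg (norm_nonneg _)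
    (norm_rootsLogTerm_sub_extend_le g k)

end TermBounds

variable {K : Type*} [NormedField K] [NormedAlgebra ℚ_[p] K]

lemma summable_rootsLogTerm {q : ℕ} {η : K} (hη : IsPrimitiveRoot η q) {G : ℚ_[p][X]}
    (hG : ∀ μ ∈ nthRootsFinset q (1 : K), ‖aeval μ G‖ < 1) : Summable (rootsLogTerm q G) := by
  refine summable_of_tendsto_atTop_zero ?_
  rw [tendsto_zero_iff_norm_tendsto_zero]
  simp only [← norm_algebraMap' K (rootsLogTerm q G _), algebraMap_rootsLogTerm hη]
  rw [← tendsto_zero_iff_norm_tendsto_zero, ← Finset.sum_const_zero]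
  exact tendsto_finsetSum _ fun μ hμ => tendsto_pow_div_natCast_zero p (hG μ hμ)

lemma norm_trace_tsum_pow_div_le {k : ℕ} [IsCyclotomicExtension {p ^ (k + 1)} ℚ_[p] K] {x : K}
    (hx : ‖x‖ < 1) :
    ‖Algebra.trace ℚ_[p] K (∑' m : ℕ, x ^ m / m)‖ ≤ ‖(p : ℚ_[p]) ^ (k + 1)‖ := by
  have hp : p.Prime := Fact.out
  have := IsCyclotomicExtension.finiteDimensional {p ^ (k + 1)} ℚ_[p] K
  have hζ := IsCyclotomicExtension.zeta_spec (p ^ (k + 1)) ℚ_[p] K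
  have hζp := hζ.pow (NeZero.pos _) (pow_succ' p k)
  have hsub : nthRootsFinset (p ^ k) (1 : K) ⊆ nthRootsFinset (p ^ (k + 1)) 1 := fun μ hμ => by
    rw [mem_nthRootsFinset (pow_pos hp.pos _)] at hμ ⊢
    rw [pow_succ, pow_mul, hμ, one_pow]
  obtain ⟨g, hgx, hg⟩ := exists_aeval_map_eq_of_norm_lt_one hζ hx
  have hsucc := summable_rootsLogTerm hζ hg
  have hk := summable_rootsLogTerm hζp fun μ hμ => hg μ (hsub hμ)
  have htrace := (summable_pow_div_natCast p hx).hasSum.map (Algebra.trace ℚ_[p] K)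
    (LinearMap.continuous_of_finiteDimensional _)
  have hterm : Algebra.trace ℚ_[p] K ∘ (fun m : ℕ => x ^ m / m) = fun m =>
      rootsLogTerm (p ^ (k + 1)) (g.map (algebraMap ℤ_[p] ℚ_[p])) m
        - rootsLogTerm (p ^ k) (g.map (algebraMap ℤ_[p] ℚ_[p])) m := funext fun m => by
    rw [Function.comp_apply, ← hgx,
      trace_aeval_pow_div hp (irreducible_cyclotomic_prime_pow_padic p k) hζ]
  rw [hterm] at htrace
  rw [htrace.unique (hsucc.hasSum.sub hk.hasSum)]
  exact norm_tsum_rootsLogTerm_sub_le hsucc hk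

end LogSeries

theorem vostokov_stmt11_general (p : ℕ) [Fact p.Prime] (n : ℕ) (hn : 1 ≤ n) (K : Type*)
    [NormedField K] [NormedAlgebra ℚ_[p] K] [IsCyclotomicExtension {p ^ n} ℚ_[p] K]
    (ε : K) (hε : ‖ε - 1‖ < 1) :
    ∃ c : ℤ_[p],
      Algebra.trace ℚ_[p] K (∑' m : ℕ, (-1 : K) ^ m * (ε - 1) ^ (m + 1) / (m + 1)) =
        (p : ℚ_[p]) ^ n * (c : ℚ_[p]) := by
  obtain ⟨k, rfl⟩ := Nat.exists_eq_add_of_le' hn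
  have := IsCyclotomicExtension.finiteDimensional {p ^ (k + 1)} ℚ_[p] K
  rw [norm_sub_rev] at hε
  rw [tsum_log_eq_neg_tsum_pow_div (summable_pow_div_natCast p hε), map_neg]
  obtain ⟨c, hc⟩ := exists_eq_mul_of_norm_le (norm_trace_tsum_pow_div_le (p := p) (k := k) hε)
  exact ⟨-c, by rw [hc, PadicInt.coe_neg, mul_neg]⟩

/-- let `p` be an odd prime, `n ≥ 1`, `K = ℚ_p(ζ_{p^n})`.  For a
principal unit `ε` of `K`, the trace `Tr_{K/ℚ_p}(log ε)` lies in `p^n·ℤ_p`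
(so that `ζ_{p^n}^{Tr(-log ε)/p^n}` is well defined, as in the Artin–Hasse formula).
Here `log` is the `p`-adic logarithm `log ε = Σ_{m≥1} (-1)^{m+1} (ε-1)^m / m`. -/
theorem vostokov_stmt11 (p : ℕ) [Fact p.Prime] (hp : p ≠ 2) (n : ℕ) (hn : 1 ≤ n)
    (K : Type*) [NormedField K] [CompleteSpace K] [Algebra ℚ_[p] K]
    [FiniteDimensional ℚ_[p] K]
    (hnorm : ∀ x : ℚ_[p], ‖algebraMap ℚ_[p] K x‖ = ‖x‖)
    (ζ : K) (hζ : IsPrimitiveRoot ζ (p ^ n))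
    (hgen : Algebra.adjoin ℚ_[p] {ζ} = ⊤)
    (ε : K) (hε : ‖ε - 1‖ < 1) :
    ∃ c : ℤ_[p],
      Algebra.trace ℚ_[p] K (∑' m : ℕ, (-1 : K) ^ m * (ε - 1) ^ (m + 1) / (m + 1)) =
        (p : ℚ_[p]) ^ n * (c : ℚ_[p]) := by
  have := isCyclotomicExtension_of_adjoin_eq_top hζ hgen
  let _ : NormedAlgebra ℚ_[p] K :=
    { norm_smul_le := fun a x => by rw [Algebra.smul_def, norm_mul, hnorm] }
  exact vostokov_stmt11_general p n hn K ε hε
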